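/- Let (F₁, F₂) be the CHFIS pair for generalized interpolation data with N = M, x₀ = y₀ = 0 and x_N = y_N = 1/2. Then F₁ is a Lipschitz function of some order δ with respect to the Manhattan metric: there exist δ ∈ (0,1] and a constant c ≥ 0 such that |F₁(X) − F₁(X̄)| ≤ c · (d_M(X, X̄))^δ for all X, X̄ ∈ [0,1/2] × [0,1/2]. -/

import Mathlib

open Real Set

noncomputable section

/-- `z_eva` (resp. `t_eva`) from the paper: `z N M - z N 0 - z 0 M + z 0 0`. -/
def eva (N M : ℕ) (z : ℕ → ℕ → ℝ) : ℝ := z N M - z N 0 - z 0 M + z 0 0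

/-- The coefficient `g_{n,m}` determined by the join-up conditions. -/
def gCoef (N M : ℕ) (x y : ℕ → ℝ) (z t : ℕ → ℕ → ℝ) (a b : ℕ → ℕ → ℝ) (n m : ℕ) : ℝ :=
  (z (n-1) (m-1) - z (n-1) m - z n (m-1) + z n m
    - a n m * eva N M z - b n m * eva N M t) / ((x 0 - x N) * (y 0 - y M))

/-- The coefficient `e_{n,m}`. -/
def eCoef (N M : ℕ) (x y : ℕ → ℝ) (z t : ℕ → ℕ → ℝ) (a b : ℕ → ℕ → ℝ) (n m : ℕ) : ℝ :=
  (z (n-1) (m-1) - z n (m-1) - a n m * (z 0 0 - z N 0) - b n m * (t 0 0 - t N 0)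
    - gCoef N M x y z t a b n m * (x 0 - x N) * y 0) / (x 0 - x N)

/-- The coefficient `f_{n,m}`. -/
def fCoef (N M : ℕ) (x y : ℕ → ℝ) (z t : ℕ → ℕ → ℝ) (a b : ℕ → ℕ → ℝ) (n m : ℕ) : ℝ :=
  (z (n-1) (m-1) - z (n-1) m - a n m * (z 0 0 - z 0 M) - b n m * (t 0 0 - t 0 M)
    - gCoef N M x y z t a b n m * (y 0 - y M) * x 0) / (y 0 - y M)

/-- The coefficient `k_{n,m}`. -/
def kCoef (N M : ℕ) (x y : ℕ → ℝ) (z t : ℕ → ℕ → ℝ) (a b : ℕ → ℕ → ℝ) (n m : ℕ) : ℝ :=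
  z n m - eCoef N M x y z t a b n m * x N - fCoef N M x y z t a b n m * y M
    - a n m * z N M - b n m * t N M - gCoef N M x y z t a b n m * x N * y M

/-- `p_{n,m}(X,Y) = e_{n,m} X + f_{n,m} Y + g_{n,m} X Y + k_{n,m}`. -/
def pMap (N M : ℕ) (x y : ℕ → ℝ) (z t : ℕ → ℕ → ℝ) (a b : ℕ → ℕ → ℝ) (n m : ℕ)
    (X Y : ℝ) : ℝ :=
  eCoef N M x y z t a b n m * X + fCoef N M x y z t a b n m * Y
    + gCoef N M x y z t a b n m * X * Y + kCoef N M x y z t a b n m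

/-- `q_{n,m}(X,Y) = ẽ_{n,m} X + f̃_{n,m} Y + g̃_{n,m} X Y + k̃_{n,m}`; it is `p` built from the
data `t` with parameters `γ` and `0`. -/
def qMap (N M : ℕ) (x y : ℕ → ℝ) (t : ℕ → ℕ → ℝ) (c : ℕ → ℕ → ℝ) (n m : ℕ) (X Y : ℝ) : ℝ :=
  pMap N M x y t t c (fun _ _ => 0) n m X Y

/-- `φ_n` (resp. `ψ_m`): the affine map of `[x₀, x_N]` onto `[x_{n-1}, x_n]`. -/
def phiMap (N : ℕ) (x : ℕ → ℝ) (n : ℕ) (X : ℝ) : ℝ :=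
  x (n-1) + (x n - x (n-1)) * (X - x 0) / (x N - x 0)

/-- Validity of generalized interpolation data: `N, M ≥ 1`, strictly increasing knots,
`|α_{n,m}| < 1` and `|β_{n,m}| + |γ_{n,m}| < 1`. -/
structure DataOK (N M : ℕ) (x y : ℕ → ℝ) (a b c : ℕ → ℕ → ℝ) : Prop where
  hN : 1 ≤ N
  hM : 1 ≤ M
  hx : ∀ i < N, x i < x (i+1)
  hy : ∀ j < M, y j < y (j+1)
  ha : ∀ n m, 1 ≤ n → n ≤ N → 1 ≤ m → m ≤ M → |a n m| < 1
  hbc : ∀ n m, 1 ≤ n → n ≤ N → 1 ≤ m → m ≤ M → |b n m| + |c n m| < 1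

/-- `(F₁, F₂)` is the CHFIS pair for the generalized interpolation data. -/
def IsCHFIS (N M : ℕ) (x y : ℕ → ℝ) (z t : ℕ → ℕ → ℝ) (a b c : ℕ → ℕ → ℝ)
    (F₁ F₂ : ℝ → ℝ → ℝ) : Prop :=
  ContinuousOn (fun P : ℝ × ℝ => F₁ P.1 P.2) (Icc (x 0) (x N) ×ˢ Icc (y 0) (y M)) ∧
  ContinuousOn (fun P : ℝ × ℝ => F₂ P.1 P.2) (Icc (x 0) (x N) ×ˢ Icc (y 0) (y M)) ∧
  (∀ i ≤ N, ∀ j ≤ M, F₁ (x i) (y j) = z i j ∧ F₂ (x i) (y j) = t i j) ∧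
  ∀ n m, 1 ≤ n → n ≤ N → 1 ≤ m → m ≤ M →
    ∀ X ∈ Icc (x 0) (x N), ∀ Y ∈ Icc (y 0) (y M),
      F₁ (phiMap N x n X) (phiMap M y m Y)
        = a n m * F₁ X Y + b n m * F₂ X Y + pMap N M x y z t a b n m X Y ∧
      F₂ (phiMap N x n X) (phiMap M y m Y)
        = c n m * F₂ X Y + qMap N M x y t c n m X Y

/-- The invariance-of-ratio condition between the knots `x, y` and the knots `xs, ys`. -/
def RatioInv (N M : ℕ) (x y xs ys : ℕ → ℝ) : Prop :=
  (∀ n, 1 ≤ n → n ≤ N → (x 0 - x N) / (xs 0 - xs N) = (x (n-1) - x n) / (xs (n-1) - xs n)) ∧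
  (∀ m, 1 ≤ m → m ≤ M → (y 0 - y M) / (ys 0 - ys M) = (y (m-1) - y m) / (ys (m-1) - ys m))

/-- `T : [x₀, x_N] → [xs₀, xs_N]` is the cell-wise affine transfer map, sending
`[x_{n-1}, x_n]` affinely onto `[xs_{n-1}, xs_n]` (one coordinate of `R` resp. `K`). -/
def IsTransfer (N : ℕ) (x xs : ℕ → ℝ) (T : ℝ → ℝ) : Prop :=
  ∀ n, 1 ≤ n → n ≤ N → ∀ X ∈ Icc (x (n-1)) (x n),
    T X = xs (n-1) + (xs n - xs (n-1)) * (X - x (n-1)) / (x n - x (n-1))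

/-- `max { |a n m| : 1 ≤ n ≤ N, 1 ≤ m ≤ M }` (as an `sSup`). -/
def supParam (N M : ℕ) (a : ℕ → ℕ → ℝ) : ℝ :=
  sSup {v : ℝ | ∃ n m, 1 ≤ n ∧ n ≤ N ∧ 1 ≤ m ∧ m ≤ M ∧ v = |a n m|}

/-- `max { (|x_n - xs_n| + |y_m - ys_m|)^δ : 0 ≤ n ≤ N, 0 ≤ m ≤ M }` (as an `sSup`). -/
def supKnotDiff (N M : ℕ) (x xs y ys : ℕ → ℝ) (d : ℝ) : ℝ :=
  sSup {v : ℝ | ∃ n m, n ≤ N ∧ m ≤ M ∧ v = (|x n - xs n| + |y m - ys m|) ^ d}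

/-- `max { |z_{n,m} - zs_{n,m}| : 0 ≤ n ≤ N, 0 ≤ m ≤ M }` (as an `sSup`). -/
def supValDiff (N M : ℕ) (z zs : ℕ → ℕ → ℝ) : ℝ :=
  sSup {v : ℝ | ∃ n m, n ≤ N ∧ m ≤ M ∧ v = |z n m - zs n m|}

/-- `max { |z_{i,j} - z_{k,l}| : 0 ≤ i,j,k,l ≤ N }` (as an `sSup`). -/
def supPairDiff (N : ℕ) (z : ℕ → ℕ → ℝ) : ℝ :=
  sSup {v : ℝ | ∃ i j k l, i ≤ N ∧ j ≤ N ∧ k ≤ N ∧ l ≤ N ∧ v = |z i j - z k l|}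

/-!
By the functional equation, an increment of `F₁` or `F₂` over a cell of one generation is at most
`q < 1` times an increment over a cell of the previous generation, up to the increment of an
inhomogeneous term, while distances shrink at most by a factor `ρ`. If that term is Hölder of order
`r` and `q < ρ ^ r`, iterating gives `|f P - f Q| ≤ q ^ k * B + K * dist P Q ^ r` for `P`, `Q` in a
common cell of generation `k`. Points at distance at most `ρ ^ k` times the size of the rectangle
are joined by four such steps, and choosing `k` with `ρ ^ k` comparable to `dist P Q` makes `f`
Hölder of order `r`. For `F₂` the inhomogeneous term is bilinear; for `F₁` it also contains
`β F₂`, hence is Hölder by the first case. All estimates are in the sup metric of the plane, which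
the Manhattan metric dominates.
-/

open Filter Function
open scoped NNReal Topology

section Holder

lemma holderOnWith_of_dist_le {E E' : Type*} [PseudoMetricSpace E] [PseudoMetricSpace E']
    {f : E → E'} {s : Set E} {C : ℝ} {r : ℝ≥0}
    (h : ∀ P ∈ s, ∀ Q ∈ s, dist (f P) (f Q) ≤ C * dist P Q ^ (r : ℝ)) :
    HolderOnWith C.toNNReal r f s := by
  intro P hP Q hQ
  rw [edist_nndist, edist_nndist, ← ENNReal.coe_rpow_of_nonneg _ r.coe_nonneg, ← ENNReal.coe_mul,
    ENNReal.coe_le_coe, ← NNReal.coe_le_coe]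
  push_cast
  exact (h P hP Q hQ).trans (by gcongr; exact C.le_coe_toNNReal)

lemma exists_holderOnWith_of_geometric_scales {E E' : Type*} [MetricSpace E]
    [PseudoMetricSpace E'] {f : E → E'} {s : Set E} {ρ D A K : ℝ} {r : ℝ≥0}
    (hρ : ρ ∈ Ioo 0 1) (hD : 0 < D) (hK : 0 ≤ K)
    (hA : ∀ P ∈ s, ∀ Q ∈ s, dist (f P) (f Q) ≤ A)
    (hscale : ∀ k : ℕ, ∀ P ∈ s, ∀ Q ∈ s, dist P Q ≤ ρ ^ k * D →
      dist (f P) (f Q) ≤ A * (ρ ^ k) ^ (r : ℝ) + K * dist P Q ^ (r : ℝ)) :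
    ∃ C, HolderOnWith C r f s := by
  obtain ⟨hρ0, hρ1⟩ := hρ
  refine ⟨_, holderOnWith_of_dist_le (C := A / (ρ * D) ^ (r : ℝ) + K) fun P hP Q hQ => ?_⟩
  rcases eq_or_ne P Q with rfl | hPQ
  · have hA0 : 0 ≤ A := dist_nonneg.trans (hA P hP P hP)
    rw [dist_self (f P)]
    positivity
  have hdist : 0 < dist P Q := dist_pos.2 hPQ
  have hA0 : 0 ≤ A := dist_nonneg.trans (hA P hP Q hQ)
  suffices h : ∃ a, 0 ≤ a ∧ a ≤ dist P Q / (ρ * D) ∧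
      dist (f P) (f Q) ≤ A * a ^ (r : ℝ) + K * dist P Q ^ (r : ℝ) by
    obtain ⟨a, ha0, ha, hle⟩ := h
    calc dist (f P) (f Q) ≤ A * a ^ (r : ℝ) + K * dist P Q ^ (r : ℝ) := hle
      _ ≤ A * (dist P Q / (ρ * D)) ^ (r : ℝ) + K * dist P Q ^ (r : ℝ) := by gcongr
      _ = (A / (ρ * D) ^ (r : ℝ) + K) * dist P Q ^ (r : ℝ) := by
        rw [Real.div_rpow hdist.le (by positivity)]; ring
  rcases le_or_gt (dist P Q) D with hle | hgt
  · obtain ⟨k, hlow, hup⟩ := exists_nat_pow_near_of_lt_one (div_pos hdist hD)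
      ((div_le_one hD).2 hle) hρ0 hρ1
    refine ⟨ρ ^ k, by positivity, ?_, hscale k P hP Q hQ ((div_le_iff₀ hD).1 hup)⟩
    rw [lt_div_iff₀ hD, pow_succ] at hlow
    rw [le_div_iff₀ (by positivity)]
    linarith
  · refine ⟨1, zero_le_one, ?_, ?_⟩
    · rw [one_le_div (by positivity)]
      nlinarith
    · rw [Real.one_rpow, mul_one]
      exact (hA P hP Q hQ).trans (le_add_of_nonneg_right (by positivity))

/-- `f` is Hölder continuous on `s` of every sufficiently small positive order. On a bounded set
this amounts to Hölder continuity of some positive order, but in this form finitely many functions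
automatically share a common order. -/
def IsHolderOn {E E' : Type*} [PseudoEMetricSpace E] [PseudoEMetricSpace E'] (f : E → E')
    (s : Set E) : Prop :=
  ∀ᶠ r in 𝓝[>] (0 : ℝ≥0), ∃ C, HolderOnWith C r f s

namespace IsHolderOn

variable {E E' : Type*} [PseudoMetricSpace E] {s : Set E}

lemma of_lipschitzOnWith [PseudoEMetricSpace E'] {f : E → E'} {K : ℝ≥0}
    (hf : LipschitzOnWith K f s) (hs : Bornology.IsBounded s) : IsHolderOn f s := by
  filter_upwards [Ioc_mem_nhdsGT one_pos] with r hr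
  exact HolderOnWith.exists_holderOnWith_of_le ⟨K, holderOnWith_one.2 hf⟩ hr.2 hs

lemma add [SeminormedAddCommGroup E'] {f g : E → E'} (hf : IsHolderOn f s)
    (hg : IsHolderOn g s) : IsHolderOn (f + g) s := by
  filter_upwards [hf, hg] with r ⟨C, hC⟩ ⟨C', hC'⟩
  exact ⟨_, HolderWith.restrict_iff.1 (hC.holderWith.add hC'.holderWith)⟩

lemma const_smul {α : Type*} [SeminormedAddCommGroup α] [SeminormedAddCommGroup E']
    [SMulZeroClass α E'] [IsBoundedSMul α E'] {f : E → E'} (hf : IsHolderOn f s) (a : α) :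
    IsHolderOn (a • f) s := by
  filter_upwards [hf] with r ⟨C, hC⟩
  exact ⟨_, HolderWith.restrict_iff.1 (hC.holderWith.smul a)⟩

end IsHolderOn

end Holder

section Cells

variable {N n k : ℕ} {x : ℕ → ℝ} {ρ u v X X' : ℝ}

lemma phiMap_sub_phiMap (N : ℕ) (x : ℕ → ℝ) (n : ℕ) (X X' : ℝ) :
    phiMap N x n X - phiMap N x n X' = (x n - x (n - 1)) / (x N - x 0) * (X - X') := by
  unfold phiMap; ring

lemma phiMap_first (N : ℕ) (x : ℕ → ℝ) (n : ℕ) : phiMap N x n (x 0) = x (n - 1) := by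
  simp [phiMap]

lemma phiMap_last (h : x 0 < x N) (n : ℕ) : phiMap N x n (x N) = x n := by
  simp [phiMap, (sub_pos.2 h).ne']

lemma image_phiMap_Icc (h : x 0 < x N) (hn : x (n - 1) < x n) (u v : ℝ) :
    phiMap N x n '' Icc u v = Icc (phiMap N x n u) (phiMap N x n v) := by
  have haffine : phiMap N x n = ((x n - x (n - 1)) / (x N - x 0) * · +
      (x (n - 1) - (x n - x (n - 1)) / (x N - x 0) * x 0)) := by
    ext X; unfold phiMap; ring
  rw [haffine]
  exact image_affine_Icc' (div_pos (sub_pos.2 hn) (sub_pos.2 h)) _ _ _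

lemma exists_mem_Icc_knots (hN : 1 ≤ N) (hX : X ∈ Icc (x 0) (x N)) :
    ∃ n ∈ Icc 1 N, X ∈ Icc (x (n - 1)) (x n) := by
  induction N, hN using Nat.le_induction with
  | base => exact ⟨1, ⟨le_rfl, le_rfl⟩, hX⟩
  | succ N hN ih =>
    rcases le_total X (x N) with h | h
    · obtain ⟨n, hn, hXn⟩ := ih ⟨hX.1, h⟩
      exact ⟨n, ⟨hn.1, hn.2.trans N.le_succ⟩, hXn⟩
    · exact ⟨N + 1, ⟨by omega, le_rfl⟩, h, hX.2⟩

/-- `x 0 < ⋯ < x N` are the knots of a subdivision of `[x 0, x N]` into `N ≥ 1` intervals, each of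
which takes up at least the proportion `ρ ∈ (0, 1)` of the whole. -/
structure IsMesh (N : ℕ) (x : ℕ → ℝ) (ρ : ℝ) : Prop where
  one_le : 1 ≤ N
  strictMonoOn : StrictMonoOn x (Iic N)
  ratio_mem : ρ ∈ Ioo 0 1
  ratio_mul_le : ∀ n ∈ Icc 1 N, ρ * (x N - x 0) ≤ x n - x (n - 1)

/-- `[u, v]` is a cell of generation `k`: the image of `[x 0, x N]` under a composition of `k` of
the maps `phiMap N x n`. -/
inductive IsCell (N : ℕ) (x : ℕ → ℝ) : ℕ → ℝ → ℝ → Prop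
  | zero : IsCell N x 0 (x 0) (x N)
  | succ {n k : ℕ} {u v : ℝ} (hn : n ∈ Icc 1 N) (h : IsCell N x k u v) :
      IsCell N x (k + 1) (phiMap N x n u) (phiMap N x n v)

/-- `X` and `X'` lie in a common closed cell of generation `k`. -/
def SameCell (N : ℕ) (x : ℕ → ℝ) (k : ℕ) (X X' : ℝ) : Prop :=
  ∃ u v, IsCell N x k u v ∧ X ∈ Icc u v ∧ X' ∈ Icc u v

lemma SameCell.symm (h : SameCell N x k X X') : SameCell N x k X' X :=
  let ⟨u, v, hc, hX, hX'⟩ := h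
  ⟨u, v, hc, hX', hX⟩

namespace IsMesh

lemma knot_lt (hx : IsMesh N x ρ) (hn : n ∈ Icc 1 N) : x (n - 1) < x n :=
  hx.strictMonoOn (mem_Iic.2 (by grind)) hn.2 (by grind)

lemma first_lt_last (hx : IsMesh N x ρ) : x 0 < x N :=
  hx.strictMonoOn (mem_Iic.2 N.zero_le) self_mem_Iic hx.one_le

lemma ratio_le (hx : IsMesh N x ρ) (hn : n ∈ Icc 1 N) :
    ρ ≤ (x n - x (n - 1)) / (x N - x 0) :=
  (le_div_iff₀ (sub_pos.2 hx.first_lt_last)).2 (hx.ratio_mul_le n hn)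

lemma exists_phiMap_eq (hx : IsMesh N x ρ) (hn : n ∈ Icc 1 N)
    (hX : X ∈ Icc (phiMap N x n u) (phiMap N x n v)) : ∃ U ∈ Icc u v, phiMap N x n U = X := by
  rwa [← image_phiMap_Icc hx.first_lt_last (hx.knot_lt hn)] at hX

lemma mapsTo_phiMap (hx : IsMesh N x ρ) (hn : n ∈ Icc 1 N) :
    MapsTo (phiMap N x n) (Icc (x 0) (x N)) (Icc (x 0) (x N)) := by
  rw [mapsTo_iff_image_subset, image_phiMap_Icc hx.first_lt_last (hx.knot_lt hn), phiMap_first,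
    phiMap_last hx.first_lt_last]
  exact Icc_subset_Icc
    (hx.strictMonoOn.monotoneOn (mem_Iic.2 N.zero_le) (mem_Iic.2 (by grind)) (Nat.zero_le _))
    (hx.strictMonoOn.monotoneOn hn.2 self_mem_Iic hn.2)

lemma mul_dist_le_dist_phiMap (hx : IsMesh N x ρ) (hn : n ∈ Icc 1 N) (X X' : ℝ) :
    ρ * dist X X' ≤ dist (phiMap N x n X) (phiMap N x n X') := by
  rw [Real.dist_eq, Real.dist_eq, phiMap_sub_phiMap, abs_mul]
  gcongr
  exact (hx.ratio_le hn).trans (le_abs_self _)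

lemma subset_of_isCell (hx : IsMesh N x ρ) (hc : IsCell N x k u v) :
    Icc u v ⊆ Icc (x 0) (x N) := by
  induction hc with
  | zero => rfl
  | succ hn _ ih =>
    rw [← image_phiMap_Icc hx.first_lt_last (hx.knot_lt hn)]
    exact ((hx.mapsTo_phiMap hn).mono_left ih).image_subset

lemma ratio_pow_mul_le_of_isCell (hx : IsMesh N x ρ) (hc : IsCell N x k u v) :
    ρ ^ k * (x N - x 0) ≤ v - u := by
  have hρ := hx.ratio_mem.1.le
  have hlt := hx.first_lt_last
  induction hc with
  | zero => simp
  | @succ n k u v hn _ ih =>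
    calc ρ ^ (k + 1) * (x N - x 0) = ρ * (ρ ^ k * (x N - x 0)) := by ring
      _ ≤ (x n - x (n - 1)) / (x N - x 0) * (v - u) :=
        mul_le_mul (hx.ratio_le hn) ih (mul_nonneg (by positivity) (sub_nonneg.2 hlt.le))
          (hρ.trans (hx.ratio_le hn))
      _ = phiMap N x n v - phiMap N x n u := (phiMap_sub_phiMap N x n v u).symm

lemma exists_isCell_mem (hx : IsMesh N x ρ) (k : ℕ) (hX : X ∈ Icc (x 0) (x N)) :
    ∃ u v, IsCell N x k u v ∧ X ∈ Icc u v := by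
  induction k generalizing X with
  | zero => exact ⟨_, _, .zero, hX⟩
  | succ k ih =>
    obtain ⟨n, hn, hXn⟩ := exists_mem_Icc_knots hx.one_le hX
    rw [← phiMap_first N x n, ← phiMap_last hx.first_lt_last n] at hXn
    obtain ⟨U, hU, rfl⟩ := hx.exists_phiMap_eq hn hXn
    obtain ⟨u, v, hc, hUc⟩ := ih hU
    refine ⟨_, _, hc.succ hn, ?_⟩
    rw [← image_phiMap_Icc hx.first_lt_last (hx.knot_lt hn)]
    exact mem_image_of_mem _ hUc

lemma exists_isCell_first (hx : IsMesh N x ρ) (k : ℕ) : ∃ v, IsCell N x k (x 0) v := by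
  induction k with
  | zero => exact ⟨_, .zero⟩
  | succ k ih =>
    obtain ⟨v, hv⟩ := ih
    have hcell := hv.succ (n := 1) ⟨le_rfl, hx.one_le⟩
    rw [phiMap_first] at hcell
    exact ⟨_, hcell⟩

lemma eq_last_or_exists_isCell_next (hx : IsMesh N x ρ) (hc : IsCell N x k u v) :
    v = x N ∨ ∃ w, IsCell N x k v w := by
  induction hc with
  | zero => exact .inl rfl
  | @succ n k u v hn _ ih =>
    rcases ih with rfl | ⟨w, hw⟩
    · rw [phiMap_last hx.first_lt_last]
      rcases hn.2.eq_or_lt with rfl | hlt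
      · exact .inl rfl
      · obtain ⟨w, hw⟩ := hx.exists_isCell_first k
        have hcell := hw.succ (n := n + 1) ⟨by omega, hlt⟩
        rw [phiMap_first, Nat.add_sub_cancel] at hcell
        exact .inr ⟨_, hcell⟩
    · exact .inr ⟨_, hw.succ hn⟩

lemma exists_sameCell_succ_preimage (hx : IsMesh N x ρ) (h : SameCell N x (k + 1) X X') :
    ∃ n ∈ Icc 1 N, ∃ U U', SameCell N x k U U' ∧ phiMap N x n U = X ∧ phiMap N x n U' = X' := by
  obtain ⟨_, _, hc, hX, hX'⟩ := h
  cases hc with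
  | succ hn hc =>
    obtain ⟨U, hU, hUX⟩ := hx.exists_phiMap_eq hn hX
    obtain ⟨U', hU', hUX'⟩ := hx.exists_phiMap_eq hn hX'
    exact ⟨_, hn, U, U', ⟨_, _, hc, hU, hU'⟩, hUX, hUX'⟩

lemma mem_of_sameCell (hx : IsMesh N x ρ) (h : SameCell N x k X X') : X ∈ Icc (x 0) (x N) :=
  let ⟨_, _, hc, hX, _⟩ := h
  hx.subset_of_isCell hc hX

lemma sameCell_self (hx : IsMesh N x ρ) (k : ℕ) (hX : X ∈ Icc (x 0) (x N)) :
    SameCell N x k X X :=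
  let ⟨u, v, hc, hXc⟩ := hx.exists_isCell_mem k hX
  ⟨u, v, hc, hXc, hXc⟩

lemma exists_sameCell_between (hx : IsMesh N x ρ) (hX : X ∈ Icc (x 0) (x N))
    (hX' : X' ∈ Icc (x 0) (x N)) (hd : dist X X' ≤ ρ ^ k * (x N - x 0)) :
    ∃ c ∈ uIcc X X', SameCell N x k X c ∧ SameCell N x k c X' := by
  wlog hle : X ≤ X' generalizing X X'
  · obtain ⟨c, hc, hXc, hcX⟩ := this hX' hX (dist_comm X X' ▸ hd) (le_of_not_ge hle)
    exact ⟨c, uIcc_comm X X' ▸ hc, hcX.symm, hXc.symm⟩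
  rw [uIcc_of_le hle]
  rw [dist_comm, Real.dist_eq, abs_of_nonneg (sub_nonneg.2 hle)] at hd
  obtain ⟨u, v, huv, hXc⟩ := hx.exists_isCell_mem k hX
  rcases le_or_gt X' v with hX'v | hvX'
  · exact ⟨X', ⟨hle, le_rfl⟩, ⟨u, v, huv, hXc, hXc.1.trans hle, hX'v⟩, hx.sameCell_self k hX'⟩
  obtain rfl | ⟨w, hvw⟩ := hx.eq_last_or_exists_isCell_next huv
  · exact absurd hX'.2 hvX'.not_ge
  have hw : X' ≤ w := by linarith [hx.ratio_pow_mul_le_of_isCell hvw, hXc.2]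
  exact ⟨v, ⟨hXc.2, hvX'.le⟩, ⟨u, v, huv, hXc, hXc.1.trans hXc.2, le_rfl⟩,
    ⟨v, w, hvw, ⟨le_rfl, hvX'.le.trans hw⟩, hvX'.le, hw⟩⟩

end IsMesh

lemma eventually_isMesh (hN : 1 ≤ N) (hx : StrictMonoOn x (Iic N)) :
    ∀ᶠ ρ in 𝓝[>] 0, IsMesh N x ρ := by
  have hgap : ∀ n ∈ Icc 1 N, ∀ᶠ ρ in 𝓝[>] (0 : ℝ), ρ * (x N - x 0) ≤ x n - x (n - 1) := by
    intro n hn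
    have hpos : 0 < x n - x (n - 1) :=
      sub_pos.2 (hx (mem_Iic.2 (by grind)) hn.2 (by grind))
    have hlim : Tendsto (fun ρ : ℝ => ρ * (x N - x 0)) (𝓝[>] 0) (𝓝 0) :=
      ((continuous_mul_const _).tendsto' 0 0 (zero_mul _)).mono_left nhdsWithin_le_nhds
    exact (hlim.eventually_lt_const hpos).mono fun _ => le_of_lt
  filter_upwards [Ioo_mem_nhdsGT one_pos, (finite_Icc 1 N).eventually_all.2 hgap] with ρ hρ hle
  exact ⟨hN, hx, hρ, hle⟩

end Cells

section SelfAffine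

variable {N M k : ℕ} {x y : ℕ → ℝ} {ρ q L e B K : ℝ}

/-- The rectangle spanned by the knots. -/
abbrev knotRect (N M : ℕ) (x y : ℕ → ℝ) : Set (ℝ × ℝ) := Icc (x 0) (x N) ×ˢ Icc (y 0) (y M)

/-- On every first-generation cell the increments of `f` are at most `q` times the corresponding
increments on the whole rectangle, up to an error which is Hölder of order `e` with constant `L`. -/
def SelfAffineEstimate {E : Type*} [PseudoMetricSpace E] (N M : ℕ) (x y : ℕ → ℝ) (q L e : ℝ)
    (f : ℝ × ℝ → E) : Prop :=
  ∀ n ∈ Icc 1 N, ∀ m ∈ Icc 1 M, ∀ P ∈ knotRect N M x y, ∀ Q ∈ knotRect N M x y,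
    dist (f (Prod.map (phiMap N x n) (phiMap M y m) P))
      (f (Prod.map (phiMap N x n) (phiMap M y m) Q)) ≤ q * dist (f P) (f Q) + L * dist P Q ^ e

lemma IsMesh.mul_dist_le_dist_prodMap (hx : IsMesh N x ρ) (hy : IsMesh M y ρ) {n m : ℕ}
    (hn : n ∈ Icc 1 N) (hm : m ∈ Icc 1 M) (P Q : ℝ × ℝ) :
    ρ * dist P Q ≤ dist (Prod.map (phiMap N x n) (phiMap M y m) P)
      (Prod.map (phiMap N x n) (phiMap M y m) Q) := by
  rw [Prod.dist_eq, Prod.dist_eq, mul_max_of_nonneg _ _ hx.ratio_mem.1.le]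
  exact max_le_max (hx.mul_dist_le_dist_phiMap hn _ _) (hy.mul_dist_le_dist_phiMap hm _ _)

namespace SelfAffineEstimate

variable {E : Type*} [PseudoMetricSpace E] {f : ℝ × ℝ → E}

lemma dist_le_of_sameCell (hf : SelfAffineEstimate N M x y q L e f)
    (hx : IsMesh N x ρ) (hy : IsMesh M y ρ) (hq : 0 ≤ q) (he : 0 ≤ e) (hK : 0 ≤ K)
    (hqK : q * K + L ≤ K * ρ ^ e)
    (hB : ∀ P ∈ knotRect N M x y, ∀ Q ∈ knotRect N M x y, dist (f P) (f Q) ≤ B)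
    {P Q : ℝ × ℝ} (h₁ : SameCell N x k P.1 Q.1) (h₂ : SameCell M y k P.2 Q.2) :
    dist (f P) (f Q) ≤ q ^ k * B + K * dist P Q ^ e := by
  induction k generalizing P Q with
  | zero =>
    rw [pow_zero, one_mul]
    exact (hB P ⟨hx.mem_of_sameCell h₁, hy.mem_of_sameCell h₂⟩ Q
      ⟨hx.mem_of_sameCell h₁.symm, hy.mem_of_sameCell h₂.symm⟩).trans
      (le_add_of_nonneg_right (by positivity))
  | succ k ih =>
    obtain ⟨X, Y⟩ := P
    obtain ⟨X', Y'⟩ := Q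
    obtain ⟨n, hn, U, U', hU, rfl, rfl⟩ := hx.exists_sameCell_succ_preimage h₁
    obtain ⟨m, hm, V, V', hV, rfl, rfl⟩ := hy.exists_sameCell_succ_preimage h₂
    have hρ := hx.ratio_mem.1.le
    have hself := hf n hn m hm (U, V) ⟨hx.mem_of_sameCell hU, hy.mem_of_sameCell hV⟩ (U', V')
      ⟨hx.mem_of_sameCell hU.symm, hy.mem_of_sameCell hV.symm⟩
    calc dist (f (phiMap N x n U, phiMap M y m V)) (f (phiMap N x n U', phiMap M y m V'))
        ≤ q * dist (f (U, V)) (f (U', V')) + L * dist (U, V) (U', V') ^ e := hself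
      _ ≤ q * (q ^ k * B + K * dist (U, V) (U', V') ^ e) + L * dist (U, V) (U', V') ^ e := by
        gcongr
        exact ih hU hV
      _ = q ^ (k + 1) * B + (q * K + L) * dist (U, V) (U', V') ^ e := by ring
      _ ≤ q ^ (k + 1) * B + K * ρ ^ e * dist (U, V) (U', V') ^ e := by gcongr
      _ = q ^ (k + 1) * B + K * (ρ * dist (U, V) (U', V')) ^ e := by
        rw [Real.mul_rpow hρ dist_nonneg, mul_assoc]
      _ ≤ _ := by
        gcongr
        exact hx.mul_dist_le_dist_prodMap hy hn hm (U, V) (U', V')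

lemma dist_le_of_dist_le_pow (hf : SelfAffineEstimate N M x y q L e f)
    (hx : IsMesh N x ρ) (hy : IsMesh M y ρ) (hq : 0 ≤ q) (he : 0 ≤ e) (hK : 0 ≤ K)
    (hqK : q * K + L ≤ K * ρ ^ e)
    (hB : ∀ P ∈ knotRect N M x y, ∀ Q ∈ knotRect N M x y, dist (f P) (f Q) ≤ B)
    {P Q : ℝ × ℝ} (hP : P ∈ knotRect N M x y) (hQ : Q ∈ knotRect N M x y)
    (hd : dist P Q ≤ ρ ^ k * min (x N - x 0) (y M - y 0)) :
    dist (f P) (f Q) ≤ 4 * (q ^ k * B + K * dist P Q ^ e) := by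
  obtain ⟨X, Y⟩ := P
  obtain ⟨X', Y'⟩ := Q
  have hρk : 0 ≤ ρ ^ k := pow_nonneg hx.ratio_mem.1.le k
  set δ := dist (X, Y) (X', Y')
  have hX : dist X X' ≤ δ := le_max_left _ _
  have hY : dist Y Y' ≤ δ := le_max_right _ _
  obtain ⟨c, hc, hXc, hcX'⟩ := hx.exists_sameCell_between hP.1 hQ.1
    (hX.trans (hd.trans (by gcongr; exact min_le_left _ _)))
  obtain ⟨c', hc', hYc', hc'Y'⟩ := hy.exists_sameCell_between hP.2 hQ.2
    (hY.trans (hd.trans (by gcongr; exact min_le_right _ _)))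
  have hYY := hy.sameCell_self k hP.2
  have hXX := hx.sameCell_self k hQ.1
  have hstep : ∀ {R S : ℝ × ℝ}, SameCell N x k R.1 S.1 → SameCell M y k R.2 S.2 → dist R S ≤ δ →
      dist (f R) (f S) ≤ q ^ k * B + K * δ ^ e := fun h₁ h₂ hRS =>
    (hf.dist_le_of_sameCell hx hy hq he hK hqK hB h₁ h₂).trans (by gcongr)
  have h₁ : dist (f (X, Y)) (f (c, Y)) ≤ q ^ k * B + K * δ ^ e := hstep hXc hYY (by
    simpa using (Real.dist_left_le_of_mem_uIcc hc).trans hX)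
  have h₂ : dist (f (c, Y)) (f (X', Y)) ≤ q ^ k * B + K * δ ^ e := hstep hcX' hYY (by
    simpa using (Real.dist_right_le_of_mem_uIcc hc).trans hX)
  have h₃ : dist (f (X', Y)) (f (X', c')) ≤ q ^ k * B + K * δ ^ e := hstep hXX hYc' (by
    simpa using (Real.dist_left_le_of_mem_uIcc hc').trans hY)
  have h₄ : dist (f (X', c')) (f (X', Y')) ≤ q ^ k * B + K * δ ^ e := hstep hXX hc'Y' (by
    simpa using (Real.dist_right_le_of_mem_uIcc hc').trans hY)
  linarith [dist_triangle4 (f (X, Y)) (f (c, Y)) (f (X', Y)) (f (X', c')),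
    dist_triangle (f (X, Y)) (f (X', c')) (f (X', Y'))]

theorem exists_holderOnWith {r : ℝ≥0} (hf : SelfAffineEstimate N M x y q L r f)
    (hx : IsMesh N x ρ) (hy : IsMesh M y ρ) (hq : 0 ≤ q) (hL : 0 ≤ L) (hqρ : q < ρ ^ (r : ℝ))
    (hb : Bornology.IsBounded (f '' knotRect N M x y)) :
    ∃ C, HolderOnWith C r f (knotRect N M x y) := by
  obtain ⟨B, hB⟩ := Metric.isBounded_iff.1 hb
  replace hB : ∀ P ∈ knotRect N M x y, ∀ Q ∈ knotRect N M x y, dist (f P) (f Q) ≤ B :=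
    fun P hP Q hQ => hB (mem_image_of_mem f hP) (mem_image_of_mem f hQ)
  set K := L / (ρ ^ (r : ℝ) - q)
  have hgap : 0 < ρ ^ (r : ℝ) - q := sub_pos.2 hqρ
  have hK : 0 ≤ K := by positivity
  have hqK : q * K + L ≤ K * ρ ^ (r : ℝ) := by
    have : K * (ρ ^ (r : ℝ) - q) = L := div_mul_cancel₀ L hgap.ne'
    linarith
  have hρ := hx.ratio_mem.1.le
  refine exists_holderOnWith_of_geometric_scales (A := 4 * B) (K := 4 * K) hx.ratio_mem
    (lt_min (sub_pos.2 hx.first_lt_last) (sub_pos.2 hy.first_lt_last)) (by positivity)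
    (fun P hP Q hQ => by linarith [hB P hP Q hQ, (dist_nonneg (x := f P) (y := f Q))])
    fun k P hP Q hQ hd => ?_
  have hB0 : 0 ≤ B := dist_nonneg.trans (hB P hP Q hQ)
  have hpow : q ^ k ≤ (ρ ^ k) ^ (r : ℝ) := by
    rw [← Real.rpow_pow_comm hρ]
    gcongr
  calc dist (f P) (f Q) ≤ 4 * (q ^ k * B + K * dist P Q ^ (r : ℝ)) :=
        hf.dist_le_of_dist_le_pow hx hy hq r.coe_nonneg hK hqK hB hP hQ hd
    _ ≤ 4 * ((ρ ^ k) ^ (r : ℝ) * B + K * dist P Q ^ (r : ℝ)) := by gcongr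
    _ = 4 * B * (ρ ^ k) ^ (r : ℝ) + 4 * K * dist P Q ^ (r : ℝ) := by ring

end SelfAffineEstimate

lemma selfAffineEstimate_of_forall_eq {f : ℝ × ℝ → ℝ} {α : ℕ → ℕ → ℝ} {g : ℕ → ℕ → ℝ × ℝ → ℝ}
    {C r : ℝ≥0} (hα : ∀ n ∈ Icc 1 N, ∀ m ∈ Icc 1 M, |α n m| ≤ q)
    (hg : ∀ n ∈ Icc 1 N, ∀ m ∈ Icc 1 M, HolderOnWith C r (g n m) (knotRect N M x y))
    (hf : ∀ n ∈ Icc 1 N, ∀ m ∈ Icc 1 M, ∀ P ∈ knotRect N M x y,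
      f (Prod.map (phiMap N x n) (phiMap M y m) P) = α n m * f P + g n m P) :
    SelfAffineEstimate N M x y q C r f := by
  intro n hn m hm P hP Q hQ
  rw [hf n hn m hm P hP, hf n hn m hm Q hQ]
  calc dist (α n m * f P + g n m P) (α n m * f Q + g n m Q)
      ≤ dist (α n m * f P) (α n m * f Q) + dist (g n m P) (g n m Q) := dist_add_add_le _ _ _ _
    _ = |α n m| * dist (f P) (f Q) + dist (g n m P) (g n m Q) := by
      rw [Real.dist_eq (α n m * f P), ← mul_sub, abs_mul, ← Real.dist_eq]
    _ ≤ q * dist (f P) (f Q) + C * dist P Q ^ (r : ℝ) := by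
      gcongr
      · exact hα n hn m hm
      · exact (hg n hn m hm).dist_le hP hQ

lemma exists_uniform_holderOnWith {E E' : Type*} [PseudoEMetricSpace E] [PseudoEMetricSpace E']
    {ι : Type*} {I : Set ι} (hI : I.Finite) {g : ι → E → E'} {s : Set E} {r : ℝ≥0}
    (hg : ∀ i ∈ I, ∃ C, HolderOnWith C r (g i) s) : ∃ C, ∀ i ∈ I, HolderOnWith C r (g i) s := by
  have hlarge : ∀ᶠ C in atTop, ∀ i ∈ I, HolderOnWith C r (g i) s :=
    hI.eventually_all.2 fun i hi =>
      let ⟨C, hC⟩ := hg i hi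
      (eventually_ge_atTop C).mono fun _ => hC.mono_const
  exact hlarge.exists

theorem isHolderOn_of_forall_eq {f : ℝ × ℝ → ℝ} {α : ℕ → ℕ → ℝ} {g : ℕ → ℕ → ℝ × ℝ → ℝ}
    (hN : 1 ≤ N) (hM : 1 ≤ M) (hx : StrictMonoOn x (Iic N)) (hy : StrictMonoOn y (Iic M))
    (hα : ∀ n ∈ Icc 1 N, ∀ m ∈ Icc 1 M, |α n m| < 1)
    (hg : ∀ n ∈ Icc 1 N, ∀ m ∈ Icc 1 M, IsHolderOn (g n m) (knotRect N M x y))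
    (hf : ∀ n ∈ Icc 1 N, ∀ m ∈ Icc 1 M, ∀ P ∈ knotRect N M x y,
      f (Prod.map (phiMap N x n) (phiMap M y m) P) = α n m * f P + g n m P)
    (hb : Bornology.IsBounded (f '' knotRect N M x y)) :
    IsHolderOn f (knotRect N M x y) := by
  obtain ⟨ρ, hxρ, hyρ⟩ := ((eventually_isMesh hN hx).and (eventually_isMesh hM hy)).exists
  have hcells : (Icc 1 N ×ˢ Icc 1 M).Finite := (finite_Icc 1 N).prod (finite_Icc 1 M)
  obtain ⟨q, ⟨hq0, hq1⟩, hαq⟩ : ∃ q ∈ Ioo (0 : ℝ) 1, ∀ i ∈ Icc 1 N ×ˢ Icc 1 M, |α i.1 i.2| ≤ q :=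
    (Eventually.and (Ioo_mem_nhdsLT one_pos) (hcells.eventually_all.2 fun i hi =>
      Eventually.mono (Ioo_mem_nhdsLT (hα i.1 hi.1 i.2 hi.2)) fun _ h => h.1.le)).exists
  have hexp : ∀ᶠ r : ℝ≥0 in 𝓝[>] 0, q < ρ ^ (r : ℝ) := by
    have hlim : Tendsto (fun r : ℝ≥0 => ρ ^ (r : ℝ)) (𝓝[>] 0) (𝓝 1) :=
      (((Real.continuous_const_rpow hxρ.ratio_mem.1.ne').comp NNReal.continuous_coe).tendsto' 0 1
        (by simp)).mono_left nhdsWithin_le_nhds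
    exact hlim.eventually_const_lt hq1
  have hgr : ∀ᶠ r in 𝓝[>] (0 : ℝ≥0), ∀ i ∈ Icc 1 N ×ˢ Icc 1 M,
      ∃ C, HolderOnWith C r (g i.1 i.2) (knotRect N M x y) :=
    hcells.eventually_all.2 fun i hi => hg i.1 hi.1 i.2 hi.2
  filter_upwards [hexp, hgr] with r hqr hgC
  obtain ⟨C, hC⟩ := exists_uniform_holderOnWith hcells hgC
  have hest : SelfAffineEstimate N M x y q C r f :=
    selfAffineEstimate_of_forall_eq (fun n hn m hm => hαq (n, m) ⟨hn, hm⟩)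
      (fun n hn m hm => hC (n, m) ⟨hn, hm⟩) hf
  exact hest.exists_holderOnWith hxρ hyρ hq0.le C.coe_nonneg hqr hb

end SelfAffine

section CHFIS

variable {N M : ℕ} {x y : ℕ → ℝ} {z t : ℕ → ℕ → ℝ} {a b c : ℕ → ℕ → ℝ} {F₁ F₂ : ℝ → ℝ → ℝ}

lemma isHolderOn_pMap (N M : ℕ) (x y : ℕ → ℝ) (z t a b : ℕ → ℕ → ℝ) (n m : ℕ)
    {s : Set (ℝ × ℝ)} (hs : Convex ℝ s) (hs' : IsCompact s) :
    IsHolderOn (fun P : ℝ × ℝ => pMap N M x y z t a b n m P.1 P.2) s := by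
  have hdiff : ContDiff ℝ 1 fun P : ℝ × ℝ => pMap N M x y z t a b n m P.1 P.2 := by
    unfold pMap; fun_prop
  obtain ⟨K, hK⟩ := hdiff.contDiffOn.exists_lipschitzOnWith one_ne_zero hs hs'
  exact .of_lipschitzOnWith hK hs'.isBounded

theorem IsCHFIS.isHolderOn_snd (hD : DataOK N M x y a b c) (hF : IsCHFIS N M x y z t a b c F₁ F₂) :
    IsHolderOn (uncurry F₂) (knotRect N M x y) := by
  have hcompact : IsCompact (knotRect N M x y) := isCompact_Icc.prod isCompact_Icc
  refine isHolderOn_of_forall_eq hD.hN hD.hM (strictMonoOn_Iic_of_lt_succ hD.hx)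
    (strictMonoOn_Iic_of_lt_succ hD.hy) (α := c)
    (g := fun n m P => qMap N M x y t c n m P.1 P.2) ?_ ?_ ?_
    (hcompact.image_of_continuousOn hF.2.1).isBounded
  · intro n hn m hm
    linarith [hD.hbc n m hn.1 hn.2 hm.1 hm.2, abs_nonneg (b n m)]
  · intro n _ m _
    exact isHolderOn_pMap N M x y t t c _ n m ((convex_Icc _ _).prod (convex_Icc _ _)) hcompact
  · intro n hn m hm P hP
    exact (hF.2.2.2 n m hn.1 hn.2 hm.1 hm.2 P.1 hP.1 P.2 hP.2).2

theorem IsCHFIS.isHolderOn_fst (hD : DataOK N M x y a b c) (hF : IsCHFIS N M x y z t a b c F₁ F₂) :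
    IsHolderOn (uncurry F₁) (knotRect N M x y) := by
  have hcompact : IsCompact (knotRect N M x y) := isCompact_Icc.prod isCompact_Icc
  refine isHolderOn_of_forall_eq hD.hN hD.hM (strictMonoOn_Iic_of_lt_succ hD.hx)
    (strictMonoOn_Iic_of_lt_succ hD.hy) (α := a)
    (g := fun n m => b n m • uncurry F₂ + fun P => pMap N M x y z t a b n m P.1 P.2) ?_ ?_ ?_
    (hcompact.image_of_continuousOn hF.1).isBounded
  · intro n hn m hm
    exact hD.ha n m hn.1 hn.2 hm.1 hm.2
  · intro n _ m _
    exact ((hF.isHolderOn_snd hD).const_smul (b n m)).add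
      (isHolderOn_pMap N M x y z t a b n m ((convex_Icc _ _).prod (convex_Icc _ _)) hcompact)
  · intro n hn m hm P hP
    rw [Pi.add_apply, ← add_assoc]
    exact (hF.2.2.2 n m hn.1 hn.2 hm.1 hm.2 P.1 hP.1 P.2 hP.2).1

theorem chfis_holder_general (hD : DataOK N M x y a b c) (hF : IsCHFIS N M x y z t a b c F₁ F₂) :
    ∃ δ ∈ Ioc (0 : ℝ) 1, ∃ C : ℝ, 0 ≤ C ∧
      ∀ X ∈ Icc (x 0) (x N), ∀ Y ∈ Icc (y 0) (y M),
        ∀ X' ∈ Icc (x 0) (x N), ∀ Y' ∈ Icc (y 0) (y M),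
          |F₁ X Y - F₁ X' Y'| ≤ C * (|X - X'| + |Y - Y'|) ^ δ := by
  obtain ⟨r, ⟨C, hC⟩, hr0, hr1⟩ :=
    ((hF.isHolderOn_fst hD).and (Ioc_mem_nhdsGT one_pos)).exists
  refine ⟨r, ⟨hr0, hr1⟩, C, C.coe_nonneg, fun X hX Y hY X' hX' Y' hY' => ?_⟩
  calc |F₁ X Y - F₁ X' Y'| ≤ C * dist (X, Y) (X', Y') ^ (r : ℝ) :=
        hC.dist_le (x := (X, Y)) (y := (X', Y')) ⟨hX, hY⟩ ⟨hX', hY'⟩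
    _ ≤ C * (|X - X'| + |Y - Y'|) ^ (r : ℝ) := by
      gcongr
      exact max_le_add_of_nonneg (abs_nonneg _) (abs_nonneg _)

end CHFIS

/-- the CHFIS component `F₁` on `[0,1/2] × [0,1/2]` is Hölder (Lipschitz of
some order `δ ∈ (0,1]`) with respect to the Manhattan metric. -/
theorem chfis_holder (N : ℕ) (x y : ℕ → ℝ) (z t : ℕ → ℕ → ℝ) (a b c : ℕ → ℕ → ℝ)
    (hD : DataOK N N x y a b c)
    (hx0 : x 0 = 0) (hy0 : y 0 = 0) (hxN : x N = 1/2) (hyN : y N = 1/2)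
    (F₁ F₂ : ℝ → ℝ → ℝ) (hF : IsCHFIS N N x y z t a b c F₁ F₂) :
    ∃ δ ∈ Set.Ioc (0:ℝ) 1, ∃ C : ℝ, 0 ≤ C ∧
      ∀ X ∈ Icc (0:ℝ) (1/2), ∀ Y ∈ Icc (0:ℝ) (1/2),
        ∀ X' ∈ Icc (0:ℝ) (1/2), ∀ Y' ∈ Icc (0:ℝ) (1/2),
          |F₁ X Y - F₁ X' Y'| ≤ C * (|X - X'| + |Y - Y'|) ^ δ := by
  simpa only [hx0, hxN, hy0, hyN] using chfis_holder_general hD hF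

end
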